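/- Let P = ½P₁ + ½P₂ be the mixed probability distribution on the boundary of the upper unit semicircular disc, where P₁ is uniform on the base and P₂ is uniform on the semicircular arc. Then the set {(−1/4 − 1/π, 1/π), (1/4 + 1/π, 1/π)} forms the optimal set of two-means for P, and the quantization error for two-means is V₂(P) = 2·((96 − 24π + 7π²)/(192π²) + (−96 − 8π + 17π²)/(64π²)). -/

import Mathlib

open MeasureTheory Real Filter
open scoped ENNReal

noncomputable section

/-- The plane `ℝ²` with the Euclidean norm. -/
abbrev E2 : Type := EuclideanSpace ℝ (Fin 2)

/-- The point `(a, b)` of `ℝ²`. -/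
def pt (a b : ℝ) : E2 := !₂[a, b]

/-- The `n`th quantization error of a Borel probability measure `P` on `ℝ²`:
the infimum of `∫ min_{a ∈ α} ‖x - a‖² dP(x)` over all (nonempty) finite sets
`α ⊆ ℝ²` with at most `n` elements. -/
def quantErr (P : Measure E2) (n : ℕ) : ℝ :=
  sInf {v : ℝ | ∃ α : Set E2, α.Finite ∧ α.Nonempty ∧ α.ncard ≤ n ∧
    v = ∫ x, sInf ((fun a => ‖x - a‖ ^ 2) '' α) ∂P}

/-- `α` is an optimal set of `n`-means for `P` if it attains the `n`th
quantization error. -/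
def IsOptimalSet (P : Measure E2) (n : ℕ) (α : Set E2) : Prop :=
  α.Finite ∧ α.Nonempty ∧ α.ncard ≤ n ∧
    (∫ x, sInf ((fun a => ‖x - a‖ ^ 2) '' α) ∂P) = quantErr P n

/-- The base `L₁ = {(t,0) : -1 ≤ t ≤ 1}` of the upper unit semicircular disc. -/
def baseL : Set E2 := segment ℝ (pt (-1) 0) (pt 1 0)

/-- The semicircular arc `L₂ = {(cos t, sin t) : 0 ≤ t ≤ π}`. -/
def semiArc : Set E2 :=
  {p | ∃ θ : ℝ, 0 ≤ θ ∧ θ ≤ Real.pi ∧ p = pt (Real.cos θ) (Real.sin θ)}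

/-- The mixed distribution `P = ½P₁ + ½P₂` on the boundary of the upper unit
semicircular disc, where `P₁` is uniform on the base `L₁` (density `1/2` w.r.t.
arc length) and `P₂` is uniform on the semicircular arc `L₂` (density `1/π`
w.r.t. arc length). -/
def semiP : Measure E2 :=
  (2 : ℝ≥0∞)⁻¹ • ((2 : ℝ≥0∞)⁻¹ • (μH[1] : Measure E2).restrict baseL) +
  (2 : ℝ≥0∞)⁻¹ • ((ENNReal.ofReal Real.pi)⁻¹ • (μH[1] : Measure E2).restrict semiArc)

/-!
A pair `{m - d, m + d}` splits the plane by the sign `f` of `⟪d, x - m⟫`. Its distortion is the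
total variance minus a term controlled by `M = ∫ f • (x - c)`, `c` the mean, and `s = ∫ f`; hence
a bound `‖M‖² ≤ V (1 - s²)` valid for all `f` with values in `[-1, 1]` shows that no pair beats
`variance - V`. For the semicircular boundary, `V = (1/4 + 1/π)²`, attained by the split along the
`y`-axis.

To prove the bound, let `h` be the even part of `f` under reflection in the `y`-axis and
`A = ∫ |h| |x₀|`. Oddness of `x₀` gives `|M₀| ≤ ∫ |x₀| - A = 1/4 + 1/π - A`, while `M₁` and `s` only
depend on `h`. Making `h` large enough to influence `M₁` or `s` costs a proportional amount of `A`
by the bathtub principle: `M₁² + V s² ≤ 7/8 A`. For `A ≤ 1/4` this suffices; for `A ≥ 1/4` and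
`|s| ≤ 3/5` it is enough to bound `M₁` by Cauchy–Schwarz; and for `|s| ≥ 3/5` the smaller cell is so
light that `‖x - c‖ ≤ √(1 + 1/π²)` settles the matter.
-/

section HausdorffMeasureOfCurves

open Set
open scoped NNReal

variable {X : Type*} [MetricSpace X] {γ : ℝ → X} {κ : ℝ≥0} {A : Set ℝ}

/-- `γ` is a curve in a metric space traversed at constant speed `κ`: it is `κ`-Lipschitz, and at
small scales, uniformly in position, it expands distances by a factor arbitrarily close to `κ`. -/
structure HasConstantSpeed (γ : ℝ → X) (κ : ℝ≥0) : Prop where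
  lipschitz : LipschitzWith κ γ
  exists_mul_dist_le : ∀ r < κ, ∃ δ > 0, ∀ s t, dist s t ≤ δ → r * dist s t ≤ dist (γ s) (γ t)

lemma hasConstantSpeed_of_isometry (hγ : Isometry γ) : HasConstantSpeed γ 1 where
  lipschitz := hγ.lipschitz
  exists_mul_dist_le r hr := ⟨1, one_pos, fun s t _ ↦ by
    rw [hγ.dist_eq]
    exact mul_le_of_le_one_left dist_nonneg (NNReal.coe_le_one.2 hr.le)⟩

variable [MeasurableSpace X] [BorelSpace X]

lemma mul_volume_le_hausdorffMeasure_image_of_mul_dist_le {r : ℝ≥0}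
    (hγ : ∀ s ∈ A, ∀ t ∈ A, r * dist s t ≤ dist (γ s) (γ t)) :
    r * volume A ≤ μH[1] (γ '' A) := by
  rcases eq_or_ne r 0 with rfl | hr
  · simp
  have hanti : AntilipschitzWith r⁻¹ (A.domRestrict γ) := by
    refine AntilipschitzWith.of_le_mul_dist fun s t ↦ ?_
    rw [NNReal.coe_inv, ← div_eq_inv_mul, le_div_iff₀' (by positivity)]
    exact hγ s s.2 t t.2
  have hA : volume A = μH[1] (univ : Set A) := by
    have h := (isometry_subtype_coe (s := A)).hausdorffMeasure_image (.inl zero_le_one) univ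
    rwa [image_univ, Subtype.range_coe, hausdorffMeasure_real] at h
  have hle := hanti.le_hausdorffMeasure_image zero_le_one univ
  rwa [image_univ, range_domRestrict, ← hA, ENNReal.rpow_one, ENNReal.coe_inv hr,
    ← ENNReal.div_eq_inv_mul, ENNReal.le_div_iff_mul_le (.inl (by simpa)) (.inl (by simp)),
    mul_comm] at hle

lemma HasConstantSpeed.mul_volume_le_hausdorffMeasure_image (hγ : HasConstantSpeed γ κ)
    (hA : MeasurableSet A) (hinj : InjOn γ A) {r : ℝ≥0} (hr : r < κ) :
    r * volume A ≤ μH[1] (γ '' A) := by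
  obtain ⟨δ, hδ, hdist⟩ := hγ.exists_mul_dist_le r hr
  let piece (n : ℤ) : Set ℝ := A ∩ Ico (n • δ) ((n + 1) • δ)
  have hpiece_le (n : ℤ) : r * volume (piece n) ≤ μH[1] (γ '' piece n) := by
    refine mul_volume_le_hausdorffMeasure_image_of_mul_dist_le fun s hs t ht ↦ hdist s t ?_
    calc dist s t ≤ (n + 1) • δ - n • δ :=
          Real.dist_le_of_mem_Icc (Ico_subset_Icc_self hs.2) (Ico_subset_Icc_self ht.2)
      _ = δ := by rw [add_smul, one_smul, add_sub_cancel_left]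
  have hpiece_subset (n : ℤ) : piece n ⊆ A := inter_subset_left
  have hpiece_meas (n : ℤ) : MeasurableSet (piece n) := hA.inter measurableSet_Ico
  have hpiece_disj : Pairwise (Function.onFun Disjoint piece) := fun m n hmn ↦
    (pairwise_disjoint_Ico_zsmul δ hmn).mono inter_subset_right inter_subset_right
  have hunion : ⋃ n, piece n = A := by
    rw [← inter_iUnion, iUnion_Ico_zsmul hδ, inter_univ]
  have himage_meas (n : ℤ) : MeasurableSet (γ '' piece n) :=
    (hpiece_meas n).image_of_continuousOn_injOn hγ.lipschitz.continuous.continuousOn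
      (hinj.mono (hpiece_subset n))
  have himage_disj : Pairwise (Function.onFun Disjoint fun n ↦ γ '' piece n) := fun m n hmn ↦
    (hpiece_disj hmn).image hinj (hpiece_subset m) (hpiece_subset n)
  calc r * volume A = ∑' n, r * volume (piece n) := by
        rw [← hunion, measure_iUnion hpiece_disj hpiece_meas, ENNReal.tsum_mul_left]
    _ ≤ ∑' n, μH[1] (γ '' piece n) := ENNReal.tsum_le_tsum hpiece_le
    _ = μH[1] (γ '' A) := by
        rw [← measure_iUnion himage_disj himage_meas, ← image_iUnion, hunion]

lemma HasConstantSpeed.hausdorffMeasure_image (hγ : HasConstantSpeed γ κ)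
    (hA : MeasurableSet A) (hinj : InjOn γ A) : μH[1] (γ '' A) = κ * volume A := by
  apply le_antisymm
  · simpa using hγ.lipschitz.hausdorffMeasure_image_le zero_le_one A
  refine ENNReal.mul_le_of_forall_lt fun r hr b hb ↦ ?_
  lift r to ℝ≥0 using hr.ne_top
  calc r * b ≤ r * volume A := by gcongr
    _ ≤ μH[1] (γ '' A) :=
        hγ.mul_volume_le_hausdorffMeasure_image hA hinj (ENNReal.coe_lt_coe.1 hr)

lemma HasConstantSpeed.hausdorffMeasure_restrict_image (hγ : HasConstantSpeed γ κ)
    (hA : MeasurableSet A) (hinj : InjOn γ A) :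
    (μH[1] : Measure X).restrict (γ '' A) = (κ : ℝ≥0∞) • (volume.restrict A).map γ := by
  have hmeas : Measurable γ := hγ.lipschitz.continuous.measurable
  ext S hS
  rw [Measure.restrict_apply hS, Measure.smul_apply, Measure.map_apply hmeas hS,
    Measure.restrict_apply (hmeas hS), smul_eq_mul, ← image_preimage_inter,
    hγ.hausdorffMeasure_image ((hmeas hS).inter hA) (hinj.mono inter_subset_right)]

end HausdorffMeasureOfCurves

lemma abs_integral_mul_add_abs_integral_mul_one_sub_le {Ω : Type*} [MeasurableSpace Ω]
    {μ : Measure Ω} {f w : Ω → ℝ} (hf : Integrable f μ) (hw : AEStronglyMeasurable w μ)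
    (hw_mem : ∀ᵐ ω ∂μ, w ω ∈ Set.Icc 0 1) :
    |∫ ω, f ω * w ω ∂μ| + |∫ ω, f ω * (1 - w ω) ∂μ| ≤ ∫ ω, |f ω| ∂μ := by
  have hfw : Integrable (fun ω ↦ f ω * w ω) μ := by
    refine hf.mul_bdd (c := 1) hw (hw_mem.mono fun ω hω ↦ ?_)
    rw [Real.norm_of_nonneg hω.1]
    exact hω.2
  have hfw' : Integrable (fun ω ↦ f ω * (1 - w ω)) μ := by
    simp_rw [mul_sub, mul_one]
    exact hf.sub hfw
  calc |∫ ω, f ω * w ω ∂μ| + |∫ ω, f ω * (1 - w ω) ∂μ|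
      ≤ ∫ ω, |f ω * w ω| ∂μ + ∫ ω, |f ω * (1 - w ω)| ∂μ :=
        add_le_add abs_integral_le_integral_abs abs_integral_le_integral_abs
    _ = ∫ ω, (|f ω * w ω| + |f ω * (1 - w ω)|) ∂μ := (integral_add hfw.abs hfw'.abs).symm
    _ = ∫ ω, |f ω| ∂μ := by
        refine integral_congr_ae (hw_mem.mono fun ω hω ↦ ?_)
        simp only [abs_mul, abs_of_nonneg hω.1, abs_of_nonneg (sub_nonneg.2 hω.2)]
        ring

section RelaxedSplit

variable {Ω Ω' : Type*} [MeasurableSpace Ω] [MeasurableSpace Ω'] {f : Ω → ℝ} {P : Measure Ω}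

/-- A relaxed splitting of `Ω` into two cells: a measurable function with values in `[-1, 1]`.
The values `±1` describe genuine splittings; the convex relaxation is stable under averaging. -/
structure RelaxedSplit (f : Ω → ℝ) : Prop where
  measurable : Measurable f
  abs_le_one : ∀ ω, |f ω| ≤ 1

namespace RelaxedSplit

lemma comp (hf : RelaxedSplit f) {g : Ω' → Ω} (hg : Measurable g) : RelaxedSplit (f ∘ g) :=
  ⟨hf.measurable.comp hg, fun ω ↦ hf.abs_le_one (g ω)⟩

lemma neg (hf : RelaxedSplit f) : RelaxedSplit (-f) :=
  ⟨hf.measurable.neg, fun ω ↦ by simpa using hf.abs_le_one ω⟩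

lemma abs (hf : RelaxedSplit f) : RelaxedSplit fun ω ↦ |f ω| :=
  ⟨continuous_abs.measurable.comp hf.measurable, fun ω ↦ by simpa using hf.abs_le_one ω⟩

lemma integrable_smul {E : Type*} [NormedAddCommGroup E] [NormedSpace ℝ E] {Y : Ω → E}
    (hf : RelaxedSplit f) (hY : Integrable Y P) : Integrable (fun ω ↦ f ω • Y ω) P :=
  hY.bdd_smul 1 hf.measurable.aestronglyMeasurable (ae_of_all _ hf.abs_le_one)

lemma integrable_mul {Y : Ω → ℝ} (hf : RelaxedSplit f) (hY : Integrable Y P) :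
    Integrable (fun ω ↦ f ω * Y ω) P :=
  hf.integrable_smul hY

lemma integrable [IsFiniteMeasure P] (hf : RelaxedSplit f) : Integrable f P :=
  .of_bound hf.measurable.aestronglyMeasurable 1 (ae_of_all _ hf.abs_le_one)

lemma sq_le_one (hf : RelaxedSplit f) (ω : Ω) : f ω ^ 2 ≤ 1 :=
  (sq_le_one_iff_abs_le_one _).2 (hf.abs_le_one ω)

lemma abs_integral_le [IsFiniteMeasure P] (hf : RelaxedSplit f) :
    |∫ ω, f ω ∂P| ≤ P.real Set.univ := by
  simpa using norm_integral_le_of_norm_le_const (f := f) (ae_of_all P hf.abs_le_one)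

lemma sq_integral_le_one [IsProbabilityMeasure P] (hf : RelaxedSplit f) :
    (∫ ω, f ω ∂P) ^ 2 ≤ 1 := by
  rw [sq_le_one_iff_abs_le_one]
  simpa using hf.abs_integral_le (P := P)

lemma norm_integral_smul_le_mul_one_sub_integral {E : Type*} [NormedAddCommGroup E]
    [NormedSpace ℝ E] [IsProbabilityMeasure P] {Y : Ω → E} {R : ℝ} (hf : RelaxedSplit f)
    (hY : Integrable Y P) (hY_mean : ∫ ω, Y ω ∂P = 0) (hY_norm : ∀ᵐ ω ∂P, ‖Y ω‖ ≤ R) :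
    ‖∫ ω, f ω • Y ω ∂P‖ ≤ R * (1 - ∫ ω, f ω ∂P) := by
  have hcompl : ∫ ω, f ω • Y ω ∂P = -∫ ω, (1 - f ω) • Y ω ∂P := by
    simp_rw [sub_smul, one_smul]
    rw [integral_sub hY (hf.integrable_smul hY), hY_mean, zero_sub, neg_neg]
  have hbound : ∀ᵐ ω ∂P, ‖(1 - f ω) • Y ω‖ ≤ R * (1 - f ω) := by
    filter_upwards [hY_norm] with ω hω
    have h1f : 0 ≤ 1 - f ω := by linarith [(abs_le.1 (hf.abs_le_one ω)).2]
    rw [norm_smul, Real.norm_of_nonneg h1f, mul_comm]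
    gcongr
  calc ‖∫ ω, f ω • Y ω ∂P‖ = ‖∫ ω, (1 - f ω) • Y ω ∂P‖ := by rw [hcompl, norm_neg]
    _ ≤ ∫ ω, R * (1 - f ω) ∂P :=
        norm_integral_le_of_norm_le (((integrable_const 1).sub hf.integrable).const_mul R) hbound
    _ = R * (1 - ∫ ω, f ω ∂P) := by
        rw [integral_const_mul, integral_sub (integrable_const 1) hf.integrable]
        simp

lemma norm_integral_smul_le_mul_one_sub_abs_integral {E : Type*} [NormedAddCommGroup E]
    [NormedSpace ℝ E] [IsProbabilityMeasure P] {Y : Ω → E} {R : ℝ} (hf : RelaxedSplit f)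
    (hY : Integrable Y P) (hY_mean : ∫ ω, Y ω ∂P = 0) (hY_norm : ∀ᵐ ω ∂P, ‖Y ω‖ ≤ R) :
    ‖∫ ω, f ω • Y ω ∂P‖ ≤ R * (1 - |∫ ω, f ω ∂P|) := by
  rcases abs_choice (∫ ω, f ω ∂P) with hs | hs
  · rw [hs]
    exact hf.norm_integral_smul_le_mul_one_sub_integral hY hY_mean hY_norm
  · have h := hf.neg.norm_integral_smul_le_mul_one_sub_integral hY hY_mean hY_norm
    simp only [Pi.neg_apply, neg_smul, integral_neg, norm_neg] at h
    rwa [hs]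

lemma sq_integral_mul_le [IsProbabilityMeasure P] {Y : Ω → ℝ} (hf : RelaxedSplit f)
    (hY : MemLp Y 2 P) (hY_mean : ∫ ω, Y ω ∂P = 0) :
    (∫ ω, f ω * Y ω ∂P) ^ 2 ≤ (1 - (∫ ω, f ω ∂P) ^ 2) * ∫ ω, Y ω ^ 2 ∂P := by
  set s := ∫ ω, f ω ∂P
  have hY_int : Integrable Y P := hY.integrable one_le_two
  have hY_sq : Integrable (fun ω ↦ Y ω ^ 2) P := hY.integrable_sq
  have hf_int : Integrable f P := hf.integrable
  have hfY_int : Integrable (fun ω ↦ f ω * Y ω) P := hf.integrable_mul hY_int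
  have hquad (t : ℝ) :
      0 ≤ (∫ ω, Y ω ^ 2 ∂P) * (t * t) + (2 * ∫ ω, f ω * Y ω ∂P) * t + (1 - s ^ 2) :=
    calc 0 ≤ ∫ ω, (f ω - s + t * Y ω) ^ 2 ∂P := integral_nonneg fun ω ↦ sq_nonneg _
      _ ≤ ∫ ω, (1 + s ^ 2 - 2 * s * f ω) + (2 * t * (f ω * Y ω) - 2 * s * t * Y ω
            + t ^ 2 * Y ω ^ 2) ∂P := by
          refine integral_mono_of_nonneg (ae_of_all _ fun ω ↦ sq_nonneg _) (by fun_prop)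
            (ae_of_all _ fun ω ↦ ?_)
          linarith [hf.sq_le_one ω]
      _ = _ := by
          rw [integral_add (by fun_prop) (by fun_prop), integral_sub (by fun_prop) (by fun_prop),
            integral_add (by fun_prop) (by fun_prop), integral_add (by fun_prop) (by fun_prop),
            integral_sub (by fun_prop) (by fun_prop)]
          simp only [integral_const, integral_const_mul, probReal_univ, one_smul, hY_mean]
          ring
  have hdiscrim := discrim_le_zero hquad
  rw [discrim] at hdiscrim
  linarith

end RelaxedSplit

section Symmetrization

variable {R : Ω ≃ᵐ Ω} {ψ : Ω → ℝ}

/-- The part of `f` that is even with respect to the reflection `R`. -/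
def evenPart (R : Ω ≃ᵐ Ω) (f : Ω → ℝ) (ω : Ω) : ℝ := (f ω + f (R ω)) / 2

lemma relaxedSplit_evenPart (hf : RelaxedSplit f) : RelaxedSplit (evenPart R f) where
  measurable := (hf.measurable.add (hf.measurable.comp R.measurable)).div_const 2
  abs_le_one ω := by
    have h₁ := abs_le.1 (hf.abs_le_one ω)
    have h₂ := abs_le.1 (hf.abs_le_one (R ω))
    rw [evenPart, abs_le]
    constructor <;> linarith

lemma integral_evenPart_mul_of_even (hR : MeasurePreserving R P P) (hRR : Function.Involutive R)
    (hψR : ∀ ω, ψ (R ω) = ψ ω) (hf : RelaxedSplit f) (hψ : Integrable ψ P) :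
    ∫ ω, evenPart R f ω * ψ ω ∂P = ∫ ω, f ω * ψ ω ∂P := by
  have hcomp : ∫ ω, f (R ω) * ψ ω ∂P = ∫ ω, f ω * ψ ω ∂P := by
    simpa only [hRR _, hψR] using (hR.integral_comp' (fun ω ↦ f (R ω) * ψ ω)).symm
  have hfR : Integrable (fun ω ↦ f (R ω) * ψ ω) P := (hf.comp R.measurable).integrable_mul hψ
  calc ∫ ω, evenPart R f ω * ψ ω ∂P = ∫ ω, (f ω * ψ ω + f (R ω) * ψ ω) / 2 ∂P := by
        simp only [evenPart, add_mul, div_mul_eq_mul_div]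
    _ = ∫ ω, f ω * ψ ω ∂P := by
        rw [integral_div, integral_add (hf.integrable_mul hψ) hfR, hcomp, add_self_div_two]

-- Pairing with an odd function only sees the odd part `(f - f ∘ R) / 2`, which is at most
-- `1 - |evenPart R f|` in absolute value.
lemma abs_integral_mul_le_of_odd (hR : MeasurePreserving R P P) (hRR : Function.Involutive R)
    (hψR : ∀ ω, ψ (R ω) = -ψ ω) (hf : RelaxedSplit f) (hψ : Integrable ψ P) :
    |∫ ω, f ω * ψ ω ∂P| ≤ ∫ ω, |ψ ω| ∂P - ∫ ω, |evenPart R f ω| * |ψ ω| ∂P := by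
  have hcomp : ∫ ω, f (R ω) * ψ ω ∂P = -∫ ω, f ω * ψ ω ∂P := by
    simpa only [hRR _, hψR, mul_neg, integral_neg] using
      (hR.integral_comp' (fun ω ↦ f (R ω) * ψ ω)).symm
  have hfR : Integrable (fun ω ↦ f (R ω) * ψ ω) P := (hf.comp R.measurable).integrable_mul hψ
  have hodd : ∫ ω, f ω * ψ ω ∂P = ∫ ω, (f ω - f (R ω)) / 2 * ψ ω ∂P := by
    simp_rw [div_mul_eq_mul_div, sub_mul]
    rw [integral_div, integral_sub (hf.integrable_mul hψ) hfR, hcomp, sub_neg_eq_add,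
      add_self_div_two]
  have heven : Integrable (fun ω ↦ |evenPart R f ω| * |ψ ω|) P :=
    (relaxedSplit_evenPart hf).abs.integrable_mul hψ.abs
  have hbound : Integrable (fun ω ↦ |ψ ω| - |evenPart R f ω| * |ψ ω|) P := hψ.abs.sub heven
  have hpoint (ω : Ω) : |(f ω - f (R ω)) / 2 * ψ ω| ≤ |ψ ω| - |evenPart R f ω| * |ψ ω| := by
    rw [abs_mul, ← one_sub_mul]
    gcongr
    have h₁ := abs_le.1 (hf.abs_le_one ω)
    have h₂ := abs_le.1 (hf.abs_le_one (R ω))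
    rcases abs_cases (evenPart R f ω) with ⟨h, -⟩ | ⟨h, -⟩ <;> rw [h, evenPart, abs_le] <;>
      constructor <;> linarith
  calc |∫ ω, f ω * ψ ω ∂P| = |∫ ω, (f ω - f (R ω)) / 2 * ψ ω ∂P| := by rw [hodd]
    _ ≤ ∫ ω, (|ψ ω| - |evenPart R f ω| * |ψ ω|) ∂P := by
        rw [← Real.norm_eq_abs]
        exact norm_integral_le_of_norm_le hbound (ae_of_all _ hpoint)
    _ = ∫ ω, |ψ ω| ∂P - ∫ ω, |evenPart R f ω| * |ψ ω| ∂P := integral_sub hψ.abs heven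

end Symmetrization

end RelaxedSplit

section TwoMeans

open scoped RealInnerProductSpace

lemma exists_relaxedSplit_mul_eq_abs {Ω : Type*} [MeasurableSpace Ω] {g : Ω → ℝ}
    (hg : Measurable g) : ∃ f, RelaxedSplit f ∧ ∀ ω, f ω * g ω = |g ω| := by
  classical
  refine ⟨fun ω ↦ if 0 ≤ g ω then 1 else -1,
    ⟨.ite (measurableSet_le measurable_const hg) measurable_const measurable_const,
      fun ω ↦ ?_⟩, fun ω ↦ ?_⟩
  · split_ifs <;> simp
  · rcases le_or_gt 0 (g ω) with h | h
    · simp [h, abs_of_nonneg h]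
    · simp [h.not_ge, abs_of_neg h]

-- Cauchy–Schwarz for the vectors `(a / √(1 - s²), b)` and `(√(1 - s²), s)`.
lemma add_mul_sq_le_add_sq {a b s V : ℝ} (hV : 0 ≤ V) (hs : s ^ 2 ≤ 1)
    (haV : a ^ 2 ≤ V * (1 - s ^ 2)) : (a + s * b) ^ 2 ≤ V + b ^ 2 := by
  have hcross : (2 * (a * (s * b))) ^ 2 ≤ (s ^ 2 * V + (1 - s ^ 2) * b ^ 2) ^ 2 :=
    calc (2 * (a * (s * b))) ^ 2 = 4 * (s ^ 2 * b ^ 2) * a ^ 2 := by ring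
      _ ≤ 4 * (s ^ 2 * b ^ 2) * (V * (1 - s ^ 2)) := by gcongr
      _ ≤ (s ^ 2 * V + (1 - s ^ 2) * b ^ 2) ^ 2 := by
          linarith [sq_nonneg (s ^ 2 * V - (1 - s ^ 2) * b ^ 2)]
  have hrhs : 0 ≤ s ^ 2 * V + (1 - s ^ 2) * b ^ 2 := by
    have := sub_nonneg.2 hs
    positivity
  linarith [(abs_le_of_sq_le_sq' hcross hrhs).2]

lemma min_norm_add_sq_norm_sub_sq {E : Type*} [NormedAddCommGroup E] [InnerProductSpace ℝ E]
    (z d : E) :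
    min (‖z + d‖ ^ 2) (‖z - d‖ ^ 2) = ‖z‖ ^ 2 + ‖d‖ ^ 2 - 2 * |⟪d, z⟫| := by
  rw [norm_add_sq_real, norm_sub_sq_real, real_inner_comm]
  rcases abs_cases ⟪d, z⟫ with ⟨h, h'⟩ | ⟨h, h'⟩ <;> rw [h]
  · rw [min_eq_right (by linarith)]
    ring
  · rw [min_eq_left (by linarith)]
    ring

section Mean

variable {E : Type*} [NormedAddCommGroup E] [MeasurableSpace E] {P : Measure E}

/-- The mean squared distance from a `P`-distributed point to the nearest point of `α`. -/
def distortion (P : Measure E) (α : Set E) : ℝ := ∫ x, sInf ((fun a ↦ ‖x - a‖ ^ 2) '' α) ∂P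

variable [IsProbabilityMeasure P]

lemma integrable_sub_const_of_memLp_two (hP : MemLp id 2 P) (m : E) :
    Integrable (fun x ↦ x - m) P :=
  (hP.integrable one_le_two).sub (integrable_const m)

lemma integrable_norm_sub_sq_of_memLp_two (hP : MemLp id 2 P) (m : E) :
    Integrable (fun x ↦ ‖x - m‖ ^ 2) P :=
  (hP.sub (memLp_const m)).integrable_norm_pow two_ne_zero

lemma integral_sub_mean_eq_zero [NormedSpace ℝ E] [CompleteSpace E] {c : E} (hP : MemLp id 2 P)
    (hc : ∫ x, x ∂P = c) : ∫ x, (x - c) ∂P = 0 := by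
  have hid : Integrable (fun x : E ↦ x) P := hP.integrable one_le_two
  rw [integral_sub hid (integrable_const c), hc, integral_const, probReal_univ, one_smul, sub_self]

end Mean

variable {E : Type*} [NormedAddCommGroup E] [InnerProductSpace ℝ E] [MeasurableSpace E]
  {P : Measure E} [IsProbabilityMeasure P] {c : E}

lemma distortion_pair (hP : MemLp id 2 P) (m d : E) :
    distortion P {m - d, m + d}
      = ∫ x, ‖x - m‖ ^ 2 ∂P + ‖d‖ ^ 2 - 2 * ∫ x, |⟪d, x - m⟫| ∂P := by
  have hsq := integrable_norm_sub_sq_of_memLp_two hP m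
  have habs : Integrable (fun x ↦ |⟪d, x - m⟫|) P :=
    ((integrable_sub_const_of_memLp_two hP m).const_inner d).abs
  calc distortion P {m - d, m + d}
      = ∫ x, (‖x - m‖ ^ 2 + ‖d‖ ^ 2 - 2 * |⟪d, x - m⟫|) ∂P := by
        refine integral_congr_ae (ae_of_all _ fun x ↦ ?_)
        simp only [Set.image_pair, csInf_pair]
        rw [← min_norm_add_sq_norm_sub_sq, sub_sub, sub_add]
    _ = ∫ x, ‖x - m‖ ^ 2 ∂P + ‖d‖ ^ 2 - 2 * ∫ x, |⟪d, x - m⟫| ∂P := by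
        rw [integral_sub (by fun_prop) (by fun_prop), integral_add (by fun_prop) (by fun_prop),
          integral_const_mul, integral_const, probReal_univ, one_smul]

variable [CompleteSpace E]

lemma integral_norm_sub_sq_eq_add (hP : MemLp id 2 P) (hc : ∫ x, x ∂P = c) (m : E) :
    ∫ x, ‖x - m‖ ^ 2 ∂P = ∫ x, ‖x - c‖ ^ 2 ∂P + ‖m - c‖ ^ 2 := by
  have hsq := integrable_norm_sub_sq_of_memLp_two hP c
  have hint := integrable_sub_const_of_memLp_two hP c
  calc ∫ x, ‖x - m‖ ^ 2 ∂P
      = ∫ x, (‖x - c‖ ^ 2 - 2 * ⟪m - c, x - c⟫ + ‖m - c‖ ^ 2) ∂P := by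
        congr with x
        rw [← sub_sub_sub_cancel_right x m c, norm_sub_sq_real, real_inner_comm]
    _ = ∫ x, ‖x - c‖ ^ 2 ∂P + ‖m - c‖ ^ 2 := by
        rw [integral_add (by fun_prop) (by fun_prop), integral_sub (by fun_prop) (by fun_prop),
          integral_const_mul, integral_inner hint,
          integral_sub_mean_eq_zero hP hc, inner_zero_right, mul_zero, sub_zero, integral_const,
          probReal_univ, one_smul]

lemma exists_integral_abs_inner_sub_eq [BorelSpace E] (hP : MemLp id 2 P) (c m d : E) :
    ∃ f : E → ℝ, RelaxedSplit f ∧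
      ∫ x, |⟪d, x - m⟫| ∂P = ⟪d, ∫ x, f x • (x - c) ∂P - (∫ x, f x ∂P) • (m - c)⟫ := by
  have hmeas : Measurable fun x ↦ ⟪d, x - m⟫ :=
    (continuous_const.inner (continuous_id.sub continuous_const)).measurable
  obtain ⟨f, hf, hf_abs⟩ := exists_relaxedSplit_mul_eq_abs hmeas
  have hint := hf.integrable_smul (integrable_sub_const_of_memLp_two hP c)
  have hint' : Integrable (fun x ↦ f x • (m - c)) P := hf.integrable_smul (integrable_const _)
  refine ⟨f, hf, ?_⟩
  calc ∫ x, |⟪d, x - m⟫| ∂P = ∫ x, ⟪d, f x • (x - c) - f x • (m - c)⟫ ∂P := by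
        congr with x
        rw [← smul_sub, sub_sub_sub_cancel_right, inner_smul_right, hf_abs]
    _ = ⟪d, ∫ x, f x • (x - c) ∂P - (∫ x, f x ∂P) • (m - c)⟫ := by
        rw [integral_inner (by fun_prop), integral_sub hint hint', integral_smul_const]

theorem sub_le_distortion_pair [BorelSpace E] (hP : MemLp id 2 P) (hc : ∫ x, x ∂P = c) {V : ℝ}
    (hV : ∀ f : E → ℝ, RelaxedSplit f →
      ‖∫ x, f x • (x - c) ∂P‖ ^ 2 ≤ V * (1 - (∫ x, f x ∂P) ^ 2)) (p q : E) :
    ∫ x, ‖x - c‖ ^ 2 ∂P - V ≤ distortion P {p, q} := by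
  obtain ⟨m, d, rfl, rfl⟩ : ∃ m d : E, p = m - d ∧ q = m + d :=
    ⟨(2⁻¹ : ℝ) • (p + q), (2⁻¹ : ℝ) • (q - p), by module, by module⟩
  obtain ⟨f, hf, hf_abs⟩ := exists_integral_abs_inner_sub_eq hP c m d
  set M := ∫ x, f x • (x - c) ∂P
  set s := ∫ x, f x ∂P
  have hV_nonneg : 0 ≤ V := by simpa using hV 0 ⟨measurable_zero, by simp⟩
  have hs : s ^ 2 ≤ 1 := hf.sq_integral_le_one
  have hnorm : ‖M - s • (m - c)‖ ^ 2 ≤ V + ‖m - c‖ ^ 2 :=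
    calc ‖M - s • (m - c)‖ ^ 2 ≤ (‖M‖ + |s| * ‖m - c‖) ^ 2 := by
          gcongr
          simpa [norm_smul] using norm_sub_le M (s • (m - c))
      _ ≤ V + ‖m - c‖ ^ 2 :=
          add_mul_sq_le_add_sq hV_nonneg (by rwa [sq_abs]) (by rw [sq_abs]; exact hV f hf)
  have hsquare : 0 ≤ ‖d‖ ^ 2 - 2 * ⟪d, M - s • (m - c)⟫ + ‖M - s • (m - c)‖ ^ 2 := by
    rw [← norm_sub_sq_real]
    positivity
  rw [distortion_pair hP, integral_norm_sub_sq_eq_add hP hc m, hf_abs]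
  linarith

end TwoMeans

section Parametrization

open Set

lemma continuous_pt {X : Type*} [TopologicalSpace X] {f g : X → ℝ} (hf : Continuous f)
    (hg : Continuous g) : Continuous fun x ↦ pt (f x) (g x) := by
  unfold pt
  fun_prop

lemma dist_pt (a b a' b' : ℝ) : dist (pt a b) (pt a' b') = √((a - a') ^ 2 + (b - b') ^ 2) := by
  simp [pt, EuclideanSpace.dist_eq, Real.dist_eq]

@[simp]
lemma pt_apply_zero (a b : ℝ) : pt a b 0 = a := rfl

@[simp]
lemma pt_apply_one (a b : ℝ) : pt a b 1 = b := rfl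

/-- The base of the semidisc, traversed at speed `1`. -/
def basePath (u : ℝ) : E2 := pt u 0

/-- The semicircular arc, traversed clockwise at speed `π / 2` with `u = 0` at the north pole, so
that `u ∈ [-1, 1]` covers the arc and `u ↦ -u` corresponds to the reflection in the `y`-axis. -/
def arcPath (u : ℝ) : E2 := pt (sin (π / 2 * u)) (cos (π / 2 * u))

@[simp]
lemma basePath_apply_zero (u : ℝ) : basePath u 0 = u := rfl

@[simp]
lemma basePath_apply_one (u : ℝ) : basePath u 1 = 0 := rfl

@[simp]
lemma arcPath_apply_zero (u : ℝ) : arcPath u 0 = sin (π / 2 * u) := rfl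

@[simp]
lemma arcPath_apply_one (u : ℝ) : arcPath u 1 = cos (π / 2 * u) := rfl

lemma continuous_basePath : Continuous basePath := continuous_pt continuous_id continuous_const

lemma continuous_arcPath : Continuous arcPath := continuous_pt (by fun_prop) (by fun_prop)

lemma isometry_basePath : Isometry basePath :=
  .of_dist_eq fun s t ↦ by simp [basePath, dist_pt, Real.dist_eq, Real.sqrt_sq_eq_abs]

lemma dist_arcPath (s t : ℝ) : dist (arcPath s) (arcPath t) = 2 * |sin (π / 4 * (s - t))| := by
  have hsq : (sin (π / 2 * s) - sin (π / 2 * t)) ^ 2 + (cos (π / 2 * s) - cos (π / 2 * t)) ^ 2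
      = (2 * sin (π / 4 * (s - t))) ^ 2 := by
    have hcos := cos_sub (π / 2 * s) (π / 2 * t)
    rw [show π / 2 * s - π / 2 * t = 2 * (π / 4 * (s - t)) by ring, cos_two_mul, cos_sq'] at hcos
    linarith [sin_sq_add_cos_sq (π / 2 * s), sin_sq_add_cos_sq (π / 2 * t)]
  rw [arcPath, arcPath, dist_pt, hsq, Real.sqrt_sq_eq_abs, abs_mul, abs_two]

lemma exists_mul_abs_le_abs_sin {ρ : ℝ} (hρ : ρ < 1) :
    ∃ δ > 0, ∀ x, |x| ≤ δ → ρ * |x| ≤ |sin x| := by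
  have hsmall := (hasDerivAt_sin 0).isLittleO.def (sub_pos.2 hρ)
  obtain ⟨δ, hδ, hx⟩ := Metric.eventually_nhds_iff_ball.1 hsmall
  refine ⟨δ / 2, half_pos hδ, fun x hxδ ↦ ?_⟩
  have h := hx x (by rw [mem_ball_zero_iff, Real.norm_eq_abs]; linarith)
  simp only [sin_zero, sub_zero, cos_zero, smul_eq_mul, mul_one, Real.norm_eq_abs] at h
  linarith [abs_sub_abs_le_abs_sub x (sin x), abs_sub_comm x (sin x)]

lemma hasConstantSpeed_arcPath : HasConstantSpeed arcPath (NNReal.pi / 2) where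
  lipschitz := LipschitzWith.of_dist_le_mul fun s t ↦ by
    rw [dist_arcPath]
    calc 2 * |sin (π / 4 * (s - t))| ≤ 2 * |π / 4 * (s - t)| := by
          gcongr 2 * ?_
          exact abs_sin_le_abs
      _ = π / 2 * dist s t := by
          rw [abs_mul, abs_of_pos (by positivity), Real.dist_eq]
          ring
  exists_mul_dist_le r hr := by
    have hr' : r / (π / 2) < 1 := (div_lt_one (by positivity)).2 (mod_cast hr)
    obtain ⟨δ, hδ, hsin⟩ := exists_mul_abs_le_abs_sin hr'
    refine ⟨4 / π * δ, by positivity, fun s t hst ↦ ?_⟩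
    have habs : |π / 4 * (s - t)| = π / 4 * dist s t := by
      rw [abs_mul, abs_of_pos (by positivity), Real.dist_eq]
    have hsmall : |π / 4 * (s - t)| ≤ δ :=
      calc |π / 4 * (s - t)| ≤ π / 4 * (4 / π * δ) := by rw [habs]; gcongr
        _ = δ := by field_simp
    calc r * dist s t = 2 * (r / (π / 2) * |π / 4 * (s - t)|) := by rw [habs]; field_simp; ring
      _ ≤ 2 * |sin (π / 4 * (s - t))| := by linarith [hsin _ hsmall]
      _ = dist (arcPath s) (arcPath t) := (dist_arcPath s t).symm

lemma injOn_arcPath : InjOn arcPath (Icc (-1) 1) := fun s hs t ht hst ↦ by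
  have hmem {u : ℝ} (hu : u ∈ Icc (-1) 1) : π / 2 * u ∈ Icc (-(π / 2)) (π / 2) :=
    ⟨by nlinarith [hu.1, pi_pos], by nlinarith [hu.2, pi_pos]⟩
  have hsin : sin (π / 2 * s) = sin (π / 2 * t) := congrArg (· 0) hst
  exact mul_left_cancel₀ (by positivity) (injOn_sin (hmem hs) (hmem ht) hsin)

lemma basePath_image_Icc : basePath '' Icc (-1) 1 = baseL := by
  have hcomb (a b : ℝ) : a • pt (-1) 0 + b • pt 1 0 = basePath (b - a) := by
    ext i
    fin_cases i
    · change a * -1 + b * 1 = b - a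
      ring
    · simp [pt, basePath]
  ext p
  constructor
  · rintro ⟨u, ⟨hu₁, hu₂⟩, rfl⟩
    refine ⟨(1 - u) / 2, (1 + u) / 2, by linarith, by linarith, by ring, ?_⟩
    rw [hcomb]
    congr 1
    ring
  · rintro ⟨a, b, ha, hb, hab, rfl⟩
    exact ⟨b - a, ⟨by linarith, by linarith⟩, (hcomb a b).symm⟩

lemma arcPath_image_Icc : arcPath '' Icc (-1) 1 = semiArc := by
  ext p
  constructor
  · rintro ⟨u, ⟨hu₁, hu₂⟩, rfl⟩
    refine ⟨π / 2 - π / 2 * u, by nlinarith [pi_pos], by nlinarith [pi_pos], ?_⟩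
    rw [cos_pi_div_two_sub, sin_pi_div_two_sub, arcPath]
  · rintro ⟨θ, hθ₁, hθ₂, rfl⟩
    refine ⟨1 - θ / (π / 2), ⟨?_, ?_⟩, ?_⟩
    · have : θ / (π / 2) ≤ 2 := by rw [div_le_iff₀ (by positivity)]; linarith
      linarith
    · have : 0 ≤ θ / (π / 2) := by positivity
      linarith
    · have hangle : π / 2 * (1 - θ / (π / 2)) = π / 2 - θ := by field_simp
      rw [arcPath, hangle, sin_pi_div_two_sub, cos_pi_div_two_sub]

/-- Half of the uniform distribution on `[-1, 1]`, the common law of the parameter of either half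
of `semiP`. -/
def halfUniform : Measure ℝ := (4 : ℝ≥0∞)⁻¹ • volume.restrict (Icc (-1) 1)

lemma semiP_eq_map_add_map : semiP = halfUniform.map basePath + halfUniform.map arcPath := by
  have hbase := (hasConstantSpeed_of_isometry isometry_basePath).hausdorffMeasure_restrict_image
    measurableSet_Icc (isometry_basePath.injective.injOn (s := Icc (-1) 1))
  have harc := hasConstantSpeed_arcPath.hausdorffMeasure_restrict_image
    measurableSet_Icc injOn_arcPath
  rw [basePath_image_Icc] at hbase
  rw [arcPath_image_Icc] at harc
  have hspeed : (ENNReal.ofReal π)⁻¹ * (NNReal.pi / 2 : NNReal) = 2⁻¹ := by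
    have hpi : ENNReal.ofReal π = NNReal.pi := ENNReal.ofReal_eq_coe_nnreal pi_pos.le
    rw [hpi, ENNReal.coe_div two_ne_zero, ENNReal.div_eq_inv_mul, mul_left_comm,
      ENNReal.inv_mul_cancel (by simp [NNReal.pi_ne_zero]) ENNReal.coe_ne_top, mul_one,
      ENNReal.coe_ofNat]
  have hquarter : (2 : ℝ≥0∞)⁻¹ * 2⁻¹ = 4⁻¹ := by
    rw [← ENNReal.mul_inv (by simp) (by simp)]
    norm_num
  rw [semiP, hbase, harc, ENNReal.coe_one, one_smul, smul_smul _ _ (Measure.map arcPath _), hspeed,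
    smul_smul, smul_smul, hquarter, halfUniform, Measure.map_smul, Measure.map_smul]

instance : IsFiniteMeasure halfUniform := by
  unfold halfUniform
  exact Measure.smul_finite _ (by simp)

lemma halfUniform_univ : halfUniform univ = 2⁻¹ := by
  have htwo : ENNReal.ofReal (1 - (-1)) = 2 := by norm_num
  have hfour : (4 : ℝ≥0∞)⁻¹ = 2⁻¹ * 2⁻¹ := by
    rw [← ENNReal.mul_inv (by simp) (by simp)]
    norm_num
  rw [halfUniform, Measure.smul_apply, Measure.restrict_apply_univ, Real.volume_Icc, smul_eq_mul,
    htwo, hfour, mul_assoc, ENNReal.inv_mul_cancel (by simp) (by simp), mul_one]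

lemma integral_halfUniform (g : ℝ → ℝ) : ∫ u, g u ∂halfUniform = (∫ u in (-1)..1, g u) / 4 := by
  rw [halfUniform, integral_smul_measure, intervalIntegral.integral_of_le (by norm_num),
    integral_Icc_eq_integral_Ioc]
  simp [div_eq_inv_mul]

lemma integrable_halfUniform_of_continuous {g : ℝ → ℝ} (hg : Continuous g) :
    Integrable g halfUniform :=
  (hg.integrableOn_Icc).smul_measure (by simp)

lemma ae_halfUniform_mem_Icc : ∀ᵐ u ∂halfUniform, u ∈ Icc (-1 : ℝ) 1 :=
  Measure.ae_smul_measure (ae_restrict_mem measurableSet_Icc) _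

lemma measurePreserving_neg_halfUniform : MeasurePreserving Neg.neg halfUniform halfUniform := by
  have h := (Measure.measurePreserving_neg (volume : Measure ℝ)).restrict_preimage
    (measurableSet_Icc (a := -1) (b := 1))
  rw [neg_preimage, neg_Icc, neg_neg] at h
  exact h.smul_measure _

instance : IsProbabilityMeasure semiP where
  measure_univ := by
    rw [semiP_eq_map_add_map, Measure.add_apply,
      Measure.map_apply continuous_basePath.measurable .univ,
      Measure.map_apply continuous_arcPath.measurable .univ, preimage_univ, preimage_univ,
      halfUniform_univ, ENNReal.inv_two_add_inv_two]

lemma integral_semiP {F : E2 → ℝ} (hF : Integrable F semiP) :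
    ∫ x, F x ∂semiP
      = ∫ u, F (basePath u) ∂halfUniform + ∫ u, F (arcPath u) ∂halfUniform := by
  rw [semiP_eq_map_add_map] at hF ⊢
  rw [integrable_add_measure] at hF
  rw [integral_add_measure hF.1 hF.2,
    integral_map continuous_basePath.aemeasurable hF.1.aestronglyMeasurable,
    integral_map continuous_arcPath.aemeasurable hF.2.aestronglyMeasurable]

lemma ae_semiP {p : E2 → Prop} (hp : MeasurableSet {x | p x})
    (hbase : ∀ u ∈ Icc (-1 : ℝ) 1, p (basePath u)) (harc : ∀ u ∈ Icc (-1 : ℝ) 1, p (arcPath u)) :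
    ∀ᵐ x ∂semiP, p x := by
  rw [semiP_eq_map_add_map, ae_add_measure_iff,
    ae_map_iff continuous_basePath.measurable.aemeasurable hp,
    ae_map_iff continuous_arcPath.measurable.aemeasurable hp]
  exact ⟨ae_halfUniform_mem_Icc.mono hbase, ae_halfUniform_mem_Icc.mono harc⟩

lemma norm_arcPath (u : ℝ) : ‖arcPath u‖ = 1 := by
  simp [arcPath, pt, EuclideanSpace.norm_eq]

lemma norm_basePath (u : ℝ) : ‖basePath u‖ = |u| := by
  simp [basePath, pt, EuclideanSpace.norm_eq, Real.sqrt_sq_eq_abs]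

lemma cos_pi_div_two_mul_nonneg {u : ℝ} (hu : u ∈ Icc (-1) 1) : 0 ≤ cos (π / 2 * u) :=
  cos_nonneg_of_mem_Icc ⟨by nlinarith [hu.1, pi_pos], by nlinarith [hu.2, pi_pos]⟩

lemma ae_semiP_norm_le_one : ∀ᵐ x ∂semiP, ‖x‖ ≤ 1 :=
  ae_semiP (measurableSet_le measurable_norm measurable_const)
    (fun u hu ↦ by rw [norm_basePath]; exact abs_le.2 hu) (fun u _ ↦ (norm_arcPath u).le)

lemma integrable_semiP_of_continuous {F : E2 → ℝ} (hF : Continuous F) : Integrable F semiP := by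
  have hsupp : ∀ᵐ x ∂semiP, x ∈ Metric.closedBall (0 : E2) 1 := by
    simpa only [mem_closedBall_zero_iff] using ae_semiP_norm_le_one
  rw [← Measure.restrict_eq_self_of_ae_mem hsupp]
  exact hF.continuousOn.integrableOn_compact (isCompact_closedBall _ _)

lemma integral_semiP_of_continuous {F : E2 → ℝ} (hF : Continuous F) :
    ∫ x, F x ∂semiP
      = (∫ u in (-1)..1, F (basePath u)) / 4 + (∫ u in (-1)..1, F (arcPath u)) / 4 := by
  rw [integral_semiP (integrable_semiP_of_continuous hF), integral_halfUniform,
    integral_halfUniform]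

lemma memLp_two_id_semiP : MemLp id 2 semiP :=
  .of_bound aestronglyMeasurable_id 1 ae_semiP_norm_le_one

/-- The reflection of the plane in the `y`-axis. -/
def yAxisReflection : E2 ≃ᵐ E2 :=
  .ofInvolutive (fun x ↦ pt (-x 0) (x 1)) (fun x ↦ by ext i; fin_cases i <;> simp [pt])
    (continuous_pt (by fun_prop) (by fun_prop)).measurable

@[simp]
lemma yAxisReflection_apply_zero (x : E2) : yAxisReflection x 0 = -x 0 := rfl

@[simp]
lemma yAxisReflection_apply_one (x : E2) : yAxisReflection x 1 = x 1 := rfl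

lemma yAxisReflection_involutive : Function.Involutive yAxisReflection := fun x ↦ by
  ext i
  fin_cases i <;> simp

lemma yAxisReflection_basePath (u : ℝ) : yAxisReflection (basePath u) = basePath (-u) := by
  simp [yAxisReflection, basePath, pt]

lemma yAxisReflection_arcPath (u : ℝ) : yAxisReflection (arcPath u) = arcPath (-u) := by
  simp [yAxisReflection, arcPath, pt]

lemma measurePreserving_yAxisReflection : MeasurePreserving yAxisReflection semiP semiP where
  measurable := yAxisReflection.measurable
  map_eq := by
    have hmap {γ : ℝ → E2} (hγ : Measurable γ) (hneg : ∀ u, yAxisReflection (γ u) = γ (-u)) :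
        (halfUniform.map γ).map yAxisReflection = halfUniform.map γ := by
      have hcomp : yAxisReflection ∘ γ = γ ∘ Neg.neg := funext hneg
      rw [Measure.map_map yAxisReflection.measurable hγ, hcomp,
        ← Measure.map_map hγ measurable_neg, measurePreserving_neg_halfUniform.map_eq]
    rw [semiP_eq_map_add_map, Measure.map_add _ _ yAxisReflection.measurable,
      hmap continuous_basePath.measurable yAxisReflection_basePath,
      hmap continuous_arcPath.measurable yAxisReflection_arcPath]

end Parametrization

section Moments

lemma intervalIntegral_neg_self_of_even {g : ℝ → ℝ} (hg : Continuous g)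
    (heven : ∀ u, g (-u) = g u) (a : ℝ) : ∫ u in (-a)..a, g u = 2 * ∫ u in (0)..a, g u := by
  have hneg : ∫ u in (-a)..0, g u = ∫ u in (0)..a, g u := by
    simpa only [heven, neg_zero] using
      (intervalIntegral.integral_comp_neg (a := 0) (b := a) g).symm
  rw [← intervalIntegral.integral_add_adjacent_intervals (hg.intervalIntegrable _ _)
    (hg.intervalIntegrable _ _), hneg, two_mul]

lemma integral_semiP_coord_zero : ∫ x, x 0 ∂semiP = 0 := by
  rw [integral_semiP_of_continuous (by fun_prop)]
  simp [intervalIntegral.integral_comp_mul_left]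

lemma integral_semiP_coord_one : ∫ x, x 1 ∂semiP = 1 / π := by
  rw [integral_semiP_of_continuous (by fun_prop)]
  simp_rw [basePath_apply_one, arcPath_apply_one]
  rw [intervalIntegral.integral_zero, intervalIntegral.integral_comp_mul_left _ (by positivity),
    integral_cos, mul_neg, mul_one, sin_neg, sin_pi_div_two, smul_eq_mul]
  field

lemma integral_semiP_coord_one_sq : ∫ x, x 1 ^ 2 ∂semiP = 1 / 4 := by
  rw [integral_semiP_of_continuous (by fun_prop)]
  simp_rw [basePath_apply_one, arcPath_apply_one]
  rw [intervalIntegral.integral_comp_mul_left (fun x ↦ cos x ^ 2) (by positivity), integral_cos_sq,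
    mul_neg, mul_one, sin_neg, cos_neg, sin_pi_div_two, cos_pi_div_two]
  simp

lemma integral_semiP_abs_coord_zero : ∫ x, |x 0| ∂semiP = 1 / 4 + 1 / π := by
  have hbase : ∫ u in (-1)..1, |u| = 1 := by
    rw [intervalIntegral_neg_self_of_even continuous_abs abs_neg,
      intervalIntegral.integral_congr (g := id) fun u hu ↦ ?_]
    · simp
    · rw [Set.uIcc_of_le zero_le_one] at hu
      exact abs_of_nonneg hu.1
  have harc : ∫ u in (-1)..1, |sin (π / 2 * u)| = 4 / π := by
    rw [intervalIntegral_neg_self_of_even (by fun_prop) (by simp),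
      intervalIntegral.integral_congr (g := fun u ↦ sin (π / 2 * u)) fun u hu ↦ ?_,
      intervalIntegral.integral_comp_mul_left _ (by positivity), integral_sin, mul_one, mul_zero,
      cos_zero, cos_pi_div_two, smul_eq_mul]
    · field
    · rw [Set.uIcc_of_le zero_le_one] at hu
      exact abs_of_nonneg (sin_nonneg_of_nonneg_of_le_pi (by have := hu.1; positivity)
        (by nlinarith [hu.2, pi_pos]))
  rw [integral_semiP_of_continuous (by fun_prop)]
  simp_rw [basePath_apply_zero, arcPath_apply_zero]
  rw [hbase, harc]
  field

lemma integral_semiP_norm_sq : ∫ x, ‖x‖ ^ 2 ∂semiP = 2 / 3 := by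
  rw [integral_semiP_of_continuous (by fun_prop)]
  simp_rw [norm_basePath, norm_arcPath, sq_abs]
  rw [integral_pow, intervalIntegral.integral_const, smul_eq_mul]
  norm_num

lemma integral_semiP_id : ∫ x, x ∂semiP = pt 0 (1 / π) := by
  have heval (i : Fin 2) : (∫ x, x ∂semiP) i = ∫ x, x i ∂semiP :=
    eval_integral_piLp (fun i ↦ integrable_semiP_of_continuous (by fun_prop)) i
  ext i
  fin_cases i
  · exact (heval 0).trans integral_semiP_coord_zero
  · exact (heval 1).trans integral_semiP_coord_one

lemma integral_semiP_coord_one_sub_sq : ∫ x, (x 1 - 1 / π) ^ 2 ∂semiP = 1 / 4 - (1 / π) ^ 2 := by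
  have hmemLp : MemLp (fun x : E2 ↦ x 1) 2 semiP :=
    (memLp_two_iff_integrable_sq (by fun_prop)).2 (integrable_semiP_of_continuous (by fun_prop))
  have hvar := ProbabilityTheory.variance_eq_sub hmemLp
  rw [ProbabilityTheory.variance_eq_integral (by fun_prop), integral_semiP_coord_one] at hvar
  rw [hvar, ← integral_semiP_coord_one_sq]
  rfl

end Moments

section SplitBound

lemma integral_halfUniform_max_sub_abs_zero {c : ℝ} (hc₀ : 0 ≤ c) (hc₁ : c ≤ 1) :
    ∫ u, max (c - |u|) 0 ∂halfUniform = c ^ 2 / 4 := by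
  have hcont : Continuous fun u ↦ max (c - |u|) 0 := by fun_prop
  have hleft : ∫ u in (0)..c, max (c - |u|) 0 = c ^ 2 / 2 := by
    rw [intervalIntegral.integral_congr (g := fun u ↦ c - u) fun u hu ↦ ?_,
      intervalIntegral.integral_sub (by simp) (by simp), integral_id,
      intervalIntegral.integral_const, smul_eq_mul]
    · ring
    · rw [Set.uIcc_of_le hc₀] at hu
      simp [abs_of_nonneg hu.1, hu.2]
  have hright : ∫ u in c..1, max (c - |u|) 0 = 0 := by
    rw [intervalIntegral.integral_congr (g := 0) fun u hu ↦ ?_]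
    · simp
    · rw [Set.uIcc_of_le hc₁] at hu
      simp [abs_of_nonneg (hc₀.trans hu.1), hu.1]
  rw [integral_halfUniform, intervalIntegral_neg_self_of_even hcont (by simp),
    ← intervalIntegral.integral_add_adjacent_intervals (hcont.intervalIntegrable 0 c)
      (hcont.intervalIntegrable c 1), hleft, hright]
  ring

-- The bathtub principle: among the `g` with given `∫ |g|`, the moment `∫ |g| |u|` is smallest when
-- `|g|` is the indicator of `{|u| ≤ c}`, `c = 2 ∫ |g|`.
lemma sq_integral_halfUniform_abs_le {g : ℝ → ℝ} (hg : RelaxedSplit g) :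
    (∫ u, |g u| ∂halfUniform) ^ 2 ≤ ∫ u, |g u| * |u| ∂halfUniform := by
  set m := ∫ u, |g u| ∂halfUniform
  have hm_nonneg : 0 ≤ m := by positivity
  have hm_le : m ≤ 1 / 2 := by
    have h := (le_abs_self m).trans hg.abs.abs_integral_le
    rwa [measureReal_def, halfUniform_univ, ENNReal.toReal_inv, ENNReal.toReal_ofNat,
      ← one_div] at h
  have hg_int : Integrable (fun u ↦ |g u|) halfUniform := hg.abs.integrable
  have hmoment : Integrable (fun u ↦ |g u| * |u|) halfUniform :=
    hg.abs.integrable_mul (integrable_halfUniform_of_continuous continuous_abs)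
  have hpoint (u : ℝ) : 2 * m * |g u| - |g u| * |u| ≤ max (2 * m - |u|) 0 := by
    rw [mul_comm (2 * m), ← mul_sub]
    rcases le_total (2 * m - |u|) 0 with h | h
    · exact (mul_nonpos_of_nonneg_of_nonpos (abs_nonneg _) h).trans (le_max_right _ _)
    · exact (mul_le_of_le_one_left h (hg.abs_le_one u)).trans (le_max_left _ _)
  have hmono : 2 * m * m - ∫ u, |g u| * |u| ∂halfUniform ≤ (2 * m) ^ 2 / 4 :=
    calc 2 * m * m - ∫ u, |g u| * |u| ∂halfUniform
        = ∫ u, (2 * m * |g u| - |g u| * |u|) ∂halfUniform := by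
          rw [integral_sub (by fun_prop) hmoment, integral_const_mul]
      _ ≤ ∫ u, max (2 * m - |u|) 0 ∂halfUniform :=
          integral_mono (by fun_prop) (integrable_halfUniform_of_continuous (by fun_prop)) hpoint
      _ = (2 * m) ^ 2 / 4 := integral_halfUniform_max_sub_abs_zero (by linarith) (by linarith)
  linarith

lemma sq_sub_mul_add_sq_le {β s p q : ℝ} (hβ₁ : 5 / 16 ≤ β) (hβ₂ : β ≤ 8 / 25) :
    (q - β * (s + (q + p))) ^ 2 + (1 / 4 + β) ^ 2 * (s + (q + p)) ^ 2
      ≤ 7 / 8 * (s ^ 2 + (|q| + |p|) ^ 2) := by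
  set e := 7 / 8 - 2 * β with he
  have he_nonneg : 0 ≤ e := by linarith
  have htotal : (β ^ 2 + (1 / 4 + β) ^ 2) * (s + (q + p)) ^ 2 ≤ 7 / 16 * (s + (q + p)) ^ 2 := by
    gcongr
    nlinarith
  have hsquare : 0 ≤ (q / 4 - 2 * e * (s - p)) ^ 2 := sq_nonneg _
  have hdiff : 4 * e ^ 2 * (s - p) ^ 2 ≤ 7 / 16 * (s - p) ^ 2 := by
    gcongr
    nlinarith
  have hq : 1 / 16 * q ^ 2 ≤ (5 / 16 - e) * q ^ 2 := by
    gcongr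
    linarith
  have hpq : e * (q * p) ≤ 7 / 8 * (|q| * |p|) :=
    calc e * (q * p) ≤ e * (|q| * |p|) := by
          rw [← abs_mul]
          gcongr
          exact le_abs_self _
      _ ≤ 7 / 8 * (|q| * |p|) := by
          gcongr
          linarith
  rw [he] at hsquare hdiff hq hpq
  rw [add_sq |q| |p|, sq_abs, sq_abs]
  linarith

lemma one_div_pi_mem_Icc : 1 / π ∈ Set.Icc (5 / 16 : ℝ) (8 / 25) := by
  rw [Set.mem_Icc, le_div_iff₀ pi_pos, div_le_iff₀ pi_pos]
  constructor <;> linarith [pi_gt_d2, pi_lt_d2]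

variable {h f : E2 → ℝ}

lemma sq_add_sq_le_integral_semiP_abs_mul_abs_coord_zero (hh : RelaxedSplit h) :
    (∫ u, |h (basePath u)| ∂halfUniform) ^ 2 + (∫ u, |h (arcPath u)| ∂halfUniform) ^ 2
      ≤ ∫ x, |h x| * |x 0| ∂semiP := by
  have hbase := hh.comp continuous_basePath.measurable
  have harc := hh.comp continuous_arcPath.measurable
  have hint : Integrable (fun x : E2 ↦ |h x| * |x 0|) semiP :=
    hh.abs.integrable_mul (integrable_semiP_of_continuous (by fun_prop))
  have hjordan : ∀ᵐ u ∂halfUniform,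
      |h (arcPath u)| * |u| ≤ |h (arcPath u)| * |sin (π / 2 * u)| := by
    filter_upwards [ae_halfUniform_mem_Icc] with u hu
    have habs : |π / 2 * u| = π / 2 * |u| := by rw [abs_mul, abs_of_pos (by positivity)]
    have hsin := mul_abs_le_abs_sin (x := π / 2 * u) <| by
      rw [habs]
      exact mul_le_of_le_one_right (by positivity) (abs_le.2 hu)
    refine mul_le_mul_of_nonneg_left ?_ (abs_nonneg _)
    calc |u| = 2 / π * |π / 2 * u| := by rw [habs]; field_simp
      _ ≤ |sin (π / 2 * u)| := hsin
  rw [integral_semiP hint]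
  refine add_le_add (sq_integral_halfUniform_abs_le hbase)
    ((sq_integral_halfUniform_abs_le harc).trans ?_)
  exact integral_mono_ae
    (harc.abs.integrable_mul (integrable_halfUniform_of_continuous continuous_abs))
    (harc.abs.integrable_mul (integrable_halfUniform_of_continuous (by fun_prop))) hjordan

lemma abs_integral_arcPath_mul_cos_add_le (hh : RelaxedSplit h) :
    |∫ u, h (arcPath u) * cos (π / 2 * u) ∂halfUniform|
      + |∫ u, h (arcPath u) * (1 - cos (π / 2 * u)) ∂halfUniform|
      ≤ ∫ u, |h (arcPath u)| ∂halfUniform := by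
  refine abs_integral_mul_add_abs_integral_mul_one_sub_le
    (hh.comp continuous_arcPath.measurable).integrable (by fun_prop) ?_
  filter_upwards [ae_halfUniform_mem_Icc] with u hu
  exact ⟨cos_pi_div_two_mul_nonneg hu, cos_le_one _⟩

lemma sq_integral_semiP_mul_coord_one_add_sq_integral_le (hh : RelaxedSplit h) :
    (∫ x, h x * (x 1 - 1 / π) ∂semiP) ^ 2 + (1 / 4 + 1 / π) ^ 2 * (∫ x, h x ∂semiP) ^ 2
      ≤ 7 / 8 * ∫ x, |h x| * |x 0| ∂semiP := by
  have harc := hh.comp continuous_arcPath.measurable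
  set s := ∫ u, h (basePath u) ∂halfUniform
  set q := ∫ u, h (arcPath u) * cos (π / 2 * u) ∂halfUniform
  set p := ∫ u, h (arcPath u) * (1 - cos (π / 2 * u)) ∂halfUniform
  have harc_cos : Integrable (fun u ↦ h (arcPath u) * cos (π / 2 * u)) halfUniform :=
    harc.integrable_mul (integrable_halfUniform_of_continuous (by fun_prop))
  have harc_one_sub_cos : Integrable (fun u ↦ h (arcPath u) * (1 - cos (π / 2 * u))) halfUniform :=
    harc.integrable_mul (integrable_halfUniform_of_continuous (by fun_prop))
  have hcoord : Integrable (fun x : E2 ↦ h x * x 1) semiP :=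
    hh.integrable_mul (integrable_semiP_of_continuous (by fun_prop))
  have htotal : ∫ x, h x ∂semiP = s + (q + p) := by
    rw [integral_semiP hh.integrable, ← integral_add harc_cos harc_one_sub_cos]
    simp only [← mul_add, add_sub_cancel, mul_one, s]
  have hheight : ∫ x, h x * (x 1 - 1 / π) ∂semiP = q - 1 / π * (s + (q + p)) := by
    simp_rw [mul_sub]
    rw [integral_sub hcoord (hh.integrable.mul_const _), integral_mul_const, htotal,
      integral_semiP hcoord]
    simp only [basePath_apply_one, mul_zero, integral_zero, arcPath_apply_one, q]
    ring
  have hs : |s| ≤ ∫ u, |h (basePath u)| ∂halfUniform := abs_integral_le_integral_abs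
  have hqp : |q| + |p| ≤ ∫ u, |h (arcPath u)| ∂halfUniform :=
    abs_integral_arcPath_mul_cos_add_le hh
  rw [hheight, htotal]
  calc (q - 1 / π * (s + (q + p))) ^ 2 + (1 / 4 + 1 / π) ^ 2 * (s + (q + p)) ^ 2
      ≤ 7 / 8 * (|s| ^ 2 + (|q| + |p|) ^ 2) := by
        rw [sq_abs]
        exact sq_sub_mul_add_sq_le one_div_pi_mem_Icc.1 one_div_pi_mem_Icc.2
    _ ≤ 7 / 8 * ((∫ u, |h (basePath u)| ∂halfUniform) ^ 2
          + (∫ u, |h (arcPath u)| ∂halfUniform) ^ 2) := by gcongr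
    _ ≤ 7 / 8 * ∫ x, |h x| * |x 0| ∂semiP := by
        gcongr
        exact sq_add_sq_le_integral_semiP_abs_mul_abs_coord_zero hh

lemma norm_integral_semiP_smul_sub_sq_eq (hf : RelaxedSplit f) :
    ‖∫ x, f x • (x - pt 0 (1 / π)) ∂semiP‖ ^ 2
      = (∫ x, f x * x 0 ∂semiP) ^ 2 + (∫ x, f x * (x 1 - 1 / π) ∂semiP) ^ 2 := by
  have hint (i : Fin 2) : Integrable (fun x ↦ (f x • (x - pt 0 (1 / π))) i) semiP :=
    hf.integrable_mul (integrable_semiP_of_continuous (by fun_prop))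
  rw [EuclideanSpace.real_norm_sq_eq, Fin.sum_univ_two, eval_integral_piLp hint,
    eval_integral_piLp hint]
  simp

lemma abs_integral_semiP_mul_coord_zero_le (hf : RelaxedSplit f) :
    |∫ x, f x * x 0 ∂semiP|
      ≤ 1 / 4 + 1 / π - ∫ x, |evenPart yAxisReflection f x| * |x 0| ∂semiP := by
  rw [← integral_semiP_abs_coord_zero]
  exact abs_integral_mul_le_of_odd measurePreserving_yAxisReflection yAxisReflection_involutive
    yAxisReflection_apply_zero hf (integrable_semiP_of_continuous (by fun_prop))

lemma sq_integral_semiP_mul_coord_one_add_sq_integral_le_evenPart (hf : RelaxedSplit f) :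
    (∫ x, f x * (x 1 - 1 / π) ∂semiP) ^ 2 + (1 / 4 + 1 / π) ^ 2 * (∫ x, f x ∂semiP) ^ 2
      ≤ 7 / 8 * ∫ x, |evenPart yAxisReflection f x| * |x 0| ∂semiP := by
  have heven {ψ : E2 → ℝ} (hψ : Continuous ψ) (hψR : ∀ x, ψ (yAxisReflection x) = ψ x) :
      ∫ x, evenPart yAxisReflection f x * ψ x ∂semiP = ∫ x, f x * ψ x ∂semiP :=
    integral_evenPart_mul_of_even measurePreserving_yAxisReflection yAxisReflection_involutive
      hψR hf (integrable_semiP_of_continuous hψ)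
  have htotal : ∫ x, evenPart yAxisReflection f x ∂semiP = ∫ x, f x ∂semiP := by
    simpa only [mul_one] using heven (ψ := fun _ ↦ 1) continuous_const fun _ ↦ rfl
  rw [← htotal, ← heven (by fun_prop) (by simp)]
  exact sq_integral_semiP_mul_coord_one_add_sq_integral_le (relaxedSplit_evenPart hf)

lemma sq_integral_semiP_mul_coord_one_le (hf : RelaxedSplit f) :
    (∫ x, f x * (x 1 - 1 / π) ∂semiP) ^ 2
      ≤ (1 / 4 - (1 / π) ^ 2) * (1 - (∫ x, f x ∂semiP) ^ 2) := by
  have hcoord : Integrable (fun x : E2 ↦ x 1) semiP := integrable_semiP_of_continuous (by fun_prop)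
  have hmemLp : MemLp (fun x : E2 ↦ x 1 - 1 / π) 2 semiP :=
    (memLp_two_iff_integrable_sq (by fun_prop)).2 (integrable_semiP_of_continuous (by fun_prop))
  have hmean : ∫ x : E2, (x 1 - 1 / π) ∂semiP = 0 := by
    rw [integral_sub hcoord (integrable_const _), integral_semiP_coord_one]
    simp
  rw [mul_comm, ← integral_semiP_coord_one_sub_sq]
  exact hf.sq_integral_mul_le hmemLp hmean

lemma ae_semiP_norm_sub_le : ∀ᵐ x ∂semiP, ‖x - pt 0 (1 / π)‖ ≤ √(1 + (1 / π) ^ 2) := by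
  refine ae_semiP (measurableSet_le (by fun_prop) measurable_const) ?_ ?_ <;>
    refine fun u hu ↦ le_sqrt_of_sq_le ?_ <;> rw [EuclideanSpace.real_norm_sq_eq, Fin.sum_univ_two]
  · have hu_sq : u ^ 2 ≤ 1 := (sq_le_one_iff_abs_le_one u).2 (abs_le.2 hu)
    simpa using hu_sq
  · have hcos := cos_pi_div_two_mul_nonneg hu
    have hcross : 0 ≤ cos (π / 2 * u) * (1 / π) := by positivity
    simp only [PiLp.sub_apply, arcPath_apply_zero, arcPath_apply_one, pt_apply_zero, pt_apply_one]
    linarith [sin_sq_add_cos_sq (π / 2 * u)]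

lemma norm_integral_semiP_smul_sub_sq_le_of_le_abs (hf : RelaxedSplit f)
    (hs : 3 / 5 ≤ |∫ x, f x ∂semiP|) :
    ‖∫ x, f x • (x - pt 0 (1 / π)) ∂semiP‖ ^ 2
      ≤ (1 / 4 + 1 / π) ^ 2 * (1 - (∫ x, f x ∂semiP) ^ 2) := by
  set s := ∫ x, f x ∂semiP
  have hs_le : |s| ≤ 1 := by simpa using hf.abs_integral_le (P := semiP)
  obtain ⟨hβ, -⟩ := one_div_pi_mem_Icc
  calc ‖∫ x, f x • (x - pt 0 (1 / π)) ∂semiP‖ ^ 2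
      ≤ (√(1 + (1 / π) ^ 2) * (1 - |s|)) ^ 2 := by
        gcongr
        exact hf.norm_integral_smul_le_mul_one_sub_abs_integral
          (integrable_sub_const_of_memLp_two memLp_two_id_semiP _)
          (integral_sub_mean_eq_zero memLp_two_id_semiP integral_semiP_id) ae_semiP_norm_sub_le
    _ = (1 + (1 / π) ^ 2) * (1 - |s|) * (1 - |s|) := by
        rw [mul_pow, sq_sqrt (by positivity)]
        ring
    _ ≤ (1 / 4 + 1 / π) ^ 2 * (1 + |s|) * (1 - |s|) := by
        gcongr ?_ * (1 - |s|)
        calc (1 + (1 / π) ^ 2) * (1 - |s|) ≤ (1 + (1 / π) ^ 2) * (1 - 3 / 5) := by gcongr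
          _ ≤ (1 / 4 + 1 / π) ^ 2 * (1 + 3 / 5) := by nlinarith
          _ ≤ (1 / 4 + 1 / π) ^ 2 * (1 + |s|) := by gcongr
    _ = (1 / 4 + 1 / π) ^ 2 * (1 - s ^ 2) := by
        rw [← sq_abs s]
        ring

lemma sq_add_sq_le_mul_one_sub_sq {β A M₀ M₁ s : ℝ} (hβ : 5 / 16 ≤ β) (hA : 0 ≤ A)
    (hs : |s| ≤ 3 / 5) (hM₀ : |M₀| ≤ 1 / 4 + β - A)
    (hM₁ : M₁ ^ 2 + (1 / 4 + β) ^ 2 * s ^ 2 ≤ 7 / 8 * A)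
    (hM₁' : M₁ ^ 2 ≤ (1 / 4 - β ^ 2) * (1 - s ^ 2)) :
    M₀ ^ 2 + M₁ ^ 2 ≤ (1 / 4 + β) ^ 2 * (1 - s ^ 2) := by
  have hM₀_sq : M₀ ^ 2 ≤ (1 / 4 + β - A) ^ 2 := sq_le_sq' (abs_le.1 hM₀).1 (abs_le.1 hM₀).2
  rcases le_total A (1 / 4) with hA' | hA'
  · nlinarith
  · have hM₀_β : M₀ ^ 2 ≤ β ^ 2 := by
      rw [sq_le_sq, abs_of_nonneg (a := β) (by linarith)]
      linarith
    have hs_sq : s ^ 2 ≤ (3 / 5) ^ 2 := by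
      rwa [sq_le_sq, abs_of_nonneg (a := (3 / 5 : ℝ)) (by norm_num)]
    have hβ_sq : β ^ 2 ≤ ((1 / 4 + β) ^ 2 - (1 / 4 - β ^ 2)) * (1 - s ^ 2) :=
      calc β ^ 2 ≤ ((1 / 4 + β) ^ 2 - (1 / 4 - β ^ 2)) * (1 - (3 / 5) ^ 2) := by nlinarith
        _ ≤ _ := by
          gcongr
          nlinarith
    linarith

theorem norm_integral_semiP_smul_sub_sq_le (hf : RelaxedSplit f) :
    ‖∫ x, f x • (x - pt 0 (1 / π)) ∂semiP‖ ^ 2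
      ≤ (1 / 4 + 1 / π) ^ 2 * (1 - (∫ x, f x ∂semiP) ^ 2) := by
  rcases le_total (3 / 5) |∫ x, f x ∂semiP| with hs | hs
  · exact norm_integral_semiP_smul_sub_sq_le_of_le_abs hf hs
  · rw [norm_integral_semiP_smul_sub_sq_eq hf]
    exact sq_add_sq_le_mul_one_sub_sq one_div_pi_mem_Icc.1 (by positivity) hs
      (abs_integral_semiP_mul_coord_zero_le hf)
      (sq_integral_semiP_mul_coord_one_add_sq_integral_le_evenPart hf)
      (sq_integral_semiP_mul_coord_one_le hf)

end SplitBound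

section OptimalPair

lemma quantErr_two_eq {P : Measure E2} {a b : E2}
    (hab : ∀ p q, distortion P {a, b} ≤ distortion P {p, q}) :
    quantErr P 2 = distortion P {a, b} := by
  refine IsLeast.csInf_eq ⟨⟨{a, b}, Set.toFinite _, Set.insert_nonempty _ _,
    (Set.ncard_insert_le _ _).trans (by simp), rfl⟩, ?_⟩
  rintro v ⟨α, hα, hα_ne, hα_card, rfl⟩
  obtain ⟨p, q, rfl⟩ : ∃ p q, α = {p, q} := by
    have hα_pos : 0 < α.ncard := (Set.ncard_pos hα).2 hα_ne
    obtain hα_one | hα_two : α.ncard = 1 ∨ α.ncard = 2 := by omega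
    · obtain ⟨p, rfl⟩ := Set.ncard_eq_one.1 hα_one
      exact ⟨p, p, by simp⟩
    · obtain ⟨p, q, -, rfl⟩ := Set.ncard_eq_two.1 hα_two
      exact ⟨p, q, rfl⟩
  exact hab p q

lemma integral_semiP_norm_sub_mean_sq :
    ∫ x, ‖x - pt 0 (1 / π)‖ ^ 2 ∂semiP = 2 / 3 - (1 / π) ^ 2 := by
  have hsteiner := integral_norm_sub_sq_eq_add memLp_two_id_semiP integral_semiP_id 0
  have hmean : ‖pt 0 (1 / π)‖ ^ 2 = (1 / π) ^ 2 := by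
    simp [EuclideanSpace.real_norm_sq_eq]
  simp only [sub_zero, zero_sub, norm_neg, integral_semiP_norm_sq, hmean] at hsteiner
  linarith

lemma distortion_semiP_optimalPair :
    distortion semiP {pt (-(1 / 4) - 1 / π) (1 / π), pt (1 / 4 + 1 / π) (1 / π)}
      = 2 / 3 - (1 / π) ^ 2 - (1 / 4 + 1 / π) ^ 2 := by
  set v := 1 / 4 + 1 / π with hv
  have hleft : pt (-(1 / 4) - 1 / π) (1 / π) = pt 0 (1 / π) - pt v 0 := by
    rw [← neg_add', ← hv]
    ext i
    fin_cases i <;> simp [pt]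
  have hright : pt v (1 / π) = pt 0 (1 / π) + pt v 0 := by
    ext i
    fin_cases i <;> simp [pt]
  have hnorm : ‖pt v 0‖ ^ 2 = v ^ 2 := by simp [EuclideanSpace.real_norm_sq_eq]
  have hinner (x : E2) : |inner ℝ (pt v 0) (x - pt 0 (1 / π))| = v * |x 0| := by
    have hv_nonneg : 0 ≤ v := by positivity
    simp [PiLp.inner_apply, abs_mul, abs_of_nonneg hv_nonneg, mul_comm]
  rw [hleft, hright, distortion_pair memLp_two_id_semiP]
  simp_rw [hinner]
  rw [integral_const_mul, integral_semiP_abs_coord_zero, integral_semiP_norm_sub_mean_sq, hnorm]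
  ring

end OptimalPair

/-- The set `{(-1/4 - 1/π, 1/π), (1/4 + 1/π, 1/π)}` forms the optimal set of
two-means for the mixed distribution on the boundary of the semicircular disc,
and `V₂ = 2((96 - 24π + 7π²)/(192π²) + (-96 - 8π + 17π²)/(64π²))`. -/
theorem stmt_14 :
    IsOptimalSet semiP 2
      {pt (-(1/4) - 1 / Real.pi) (1 / Real.pi), pt (1/4 + 1 / Real.pi) (1 / Real.pi)} ∧
    quantErr semiP 2 =
      2 * ((96 - 24 * Real.pi + 7 * Real.pi ^ 2) / (192 * Real.pi ^ 2) +
        (-96 - 8 * Real.pi + 17 * Real.pi ^ 2) / (64 * Real.pi ^ 2)) := by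
  have herr := quantErr_two_eq fun p q ↦
    calc distortion semiP {pt (-(1/4) - 1 / π) (1 / π), pt (1/4 + 1 / π) (1 / π)}
        = ∫ x, ‖x - pt 0 (1 / π)‖ ^ 2 ∂semiP - (1 / 4 + 1 / π) ^ 2 := by
          rw [distortion_semiP_optimalPair, integral_semiP_norm_sub_mean_sq]
      _ ≤ distortion semiP {p, q} :=
          sub_le_distortion_pair memLp_two_id_semiP integral_semiP_id
            (fun _ hf ↦ norm_integral_semiP_smul_sub_sq_le hf) p q
  refine ⟨⟨Set.toFinite _, Set.insert_nonempty _ _, (Set.ncard_insert_le _ _).trans (by simp),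
    herr.symm⟩, ?_⟩
  rw [herr, distortion_semiP_optimalPair]
  field_simp
  ring
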